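/- Upper bound of the smoothed max-relative entropy by the Petz–Rényi divergence: For all states ρ, σ on ℂ^d, all ε ∈ (0,1) and all α ∈ (1,∞), D_max^ε(ρ‖σ) ≤ D_α(ρ‖σ) + (2/(α−1)) log(1/ε) + log(1/(1−ε²)) in the extended reals. -/

import Mathlib

open scoped Kronecker ComplexOrder

noncomputable section

namespace QCD

attribute [local instance] Classical.propDecidable

variable {n m : Type} [Fintype n] [DecidableEq n] [Fintype m] [DecidableEq m]

/-- The real part of the trace of a complex matrix. -/
def rtr (A : Matrix n n ℂ) : ℝ := (A.trace).re

/-- A quantum state: positive semidefinite with trace one. -/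
def IsState (ρ : Matrix n n ℂ) : Prop := ρ.PosSemidef ∧ ρ.trace = 1

/-- Loewner order: `A ≤ B` iff `B - A` is positive semidefinite. -/
def loewnerLE (A B : Matrix n n ℂ) : Prop := (B - A).PosSemidef

/-- Support containment (for PSD matrices): `ker σ ⊆ ker ρ`. -/
def SuppLE (ρ σ : Matrix n n ℂ) : Prop := ∀ v : n → ℂ, σ.mulVec v = 0 → ρ.mulVec v = 0

/-- Functional calculus for Hermitian matrices (junk value `0` otherwise). -/
def matFun (f : ℝ → ℝ) (A : Matrix n n ℂ) : Matrix n n ℂ :=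
  if hA : A.IsHermitian then
    (hA.eigenvectorUnitary : Matrix n n ℂ) *
      Matrix.diagonal (fun i => (f (hA.eigenvalues i) : ℂ)) *
      (star (hA.eigenvectorUnitary : Matrix n n ℂ))
  else 0

/-- Matrix square root via functional calculus. -/
def msqrt (A : Matrix n n ℂ) : Matrix n n ℂ := matFun Real.sqrt A

/-- Matrix real power taken on the support (`0 ^ t := 0`). -/
def mpow (A : Matrix n n ℂ) (t : ℝ) : Matrix n n ℂ :=
  matFun (fun x => if x = 0 then 0 else x ^ t) A

/-- Matrix base-2 logarithm on the support. -/
def mlog (A : Matrix n n ℂ) : Matrix n n ℂ := matFun (Real.logb 2) A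

/-- Positive part of a Hermitian matrix. -/
def mposPart (A : Matrix n n ℂ) : Matrix n n ℂ := matFun (fun x => max x 0) A

/-- Trace norm. -/
def traceNorm (A : Matrix n m ℂ) : ℝ := rtr (msqrt (A.conjTranspose * A))

/-- Base-2 logarithm as an extended real (`⊥` on nonpositive input). -/
def elog (x : ℝ) : EReal := if x ≤ 0 then ⊥ else ((Real.logb 2 x : ℝ) : EReal)

/-- Base-2 logarithm of an extended real. -/
def elogE (x : EReal) : EReal := if x = ⊤ then ⊤ else elog x.toReal

/-- `2 ^ x` for an extended real `x`. -/
def epow2 (x : EReal) : EReal :=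
  if x = ⊤ then ⊤ else if x = ⊥ then 0 else ((((2:ℝ) ^ x.toReal : ℝ)) : EReal)

/-- Umegaki relative entropy (base 2), `⊤` if the support condition fails. -/
def relEntropy (ρ σ : Matrix n n ℂ) : EReal :=
  if SuppLE ρ σ then ((rtr (ρ * (mlog ρ - mlog σ)) : ℝ) : EReal) else ⊤

/-- Petz–Rényi divergence (base 2). -/
def petzRenyi (α : ℝ) (ρ σ : Matrix n n ℂ) : EReal :=
  if 1 < α ∧ ¬ SuppLE ρ σ then ⊤
  else (((α - 1)⁻¹ : ℝ) : EReal) * elog (rtr (mpow ρ α * mpow σ (1 - α)))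

/-- Geometric (maximal) Rényi divergence (base 2). -/
def geomRenyi (α : ℝ) (ρ σ : Matrix n n ℂ) : EReal :=
  if SuppLE ρ σ then
    (((α - 1)⁻¹ : ℝ) : EReal) *
      elog (rtr (σ * mpow (mpow σ (-(1/2 : ℝ)) * ρ * mpow σ (-(1/2 : ℝ))) α))
  else ⊤

/-- Max-relative entropy (base 2). -/
def dMax (ρ σ : Matrix n n ℂ) : EReal :=
  sInf {x : EReal | ∃ lam : ℝ, x = (lam : EReal) ∧ loewnerLE ρ ((((2:ℝ) ^ lam : ℝ) : ℂ) • σ)}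

/-- Uhlmann fidelity. -/
def fidelity (ρ σ : Matrix n n ℂ) : ℝ := (rtr (msqrt (msqrt σ * ρ * msqrt σ))) ^ 2

/-- Sine (purified) distance. -/
def sineDist (ρ σ : Matrix n n ℂ) : ℝ := Real.sqrt (1 - fidelity ρ σ)

/-- Smoothed max-relative entropy: smoothing over states in the sine-distance ball. -/
def dMaxSmooth (δ : ℝ) (ρ σ : Matrix n n ℂ) : EReal :=
  ⨅ (ρ' : Matrix n n ℂ) (_ : IsState ρ' ∧ sineDist ρ ρ' ≤ δ), dMax ρ' σ

/-- Hypothesis testing divergence (base 2). -/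
def dH (ε : ℝ) (ρ σ : Matrix n n ℂ) : EReal :=
  - elog (sInf {x : ℝ | ∃ T : Matrix n n ℂ,
      T.PosSemidef ∧ ((1 : Matrix n n ℂ) - T).PosSemidef ∧ 1 - ε ≤ rtr (T * ρ) ∧ x = rtr (T * σ)})

/-- The quantity `c_γ(ρ‖σ)`. -/
def cGamma (γ : ℝ) (ρ σ : Matrix n n ℂ) : EReal :=
  ((γ⁻¹ : ℝ) : EReal) *
    elogE (epow2 ((γ : ℝ) * petzRenyi (1 + γ) ρ σ) +
           epow2 (((-γ : ℝ) : EReal) * petzRenyi (1 - γ) ρ σ) + 1)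

/-- Binary entropy (base 2). -/
def binEnt (x : ℝ) : ℝ := -(x * Real.logb 2 x) - (1 - x) * Real.logb 2 (1 - x)

/-- Action of `id_k ⊗ Φ` on block matrices. -/
def blockApply {k : Type} (Φ : Matrix n n ℂ →ₗ[ℂ] Matrix m m ℂ)
    (M : Matrix (k × n) (k × n) ℂ) : Matrix (k × m) (k × m) ℂ :=
  Matrix.of fun p q => Φ (Matrix.of fun a b => M (p.1, a) (q.1, b)) p.2 q.2

/-- Action of `Φ ⊗ id_k` on block matrices. -/
def blockApplyRight {k : Type} (Φ : Matrix n n ℂ →ₗ[ℂ] Matrix m m ℂ)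
    (M : Matrix (n × k) (n × k) ℂ) : Matrix (m × k) (m × k) ℂ :=
  Matrix.of fun p q => Φ (Matrix.of fun a b => M (a, p.2) (b, q.2)) p.1 q.1

/-- Quantum channel: trace preserving and completely positive. -/
def IsQChannel (Φ : Matrix n n ℂ →ₗ[ℂ] Matrix m m ℂ) : Prop :=
  (∀ M : Matrix n n ℂ, (Φ M).trace = M.trace) ∧
  (∀ k : ℕ, 1 ≤ k → ∀ M : Matrix (Fin k × n) (Fin k × n) ℂ, M.PosSemidef →
    (blockApply Φ M).PosSemidef)

/-- `id_k ⊗ Φ` as a linear map. -/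
def blockApplyL (k : Type) (Φ : Matrix n n ℂ →ₗ[ℂ] Matrix m m ℂ) :
    Matrix (k × n) (k × n) ℂ →ₗ[ℂ] Matrix (k × m) (k × m) ℂ where
  toFun := blockApply Φ
  map_add' M N := by
    ext p q
    show Φ (Matrix.of fun a b => (M + N) (p.1, a) (q.1, b)) p.2 q.2 = _
    have h : (Matrix.of fun a b => (M + N) (p.1, a) (q.1, b)) =
        (Matrix.of fun a b => M (p.1, a) (q.1, b)) +
          (Matrix.of fun a b => N (p.1, a) (q.1, b)) := rfl
    rw [h, map_add]
    rfl
  map_smul' c M := by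
    ext p q
    show Φ (Matrix.of fun a b => (c • M) (p.1, a) (q.1, b)) p.2 q.2 = _
    have h : (Matrix.of fun a b => (c • M) (p.1, a) (q.1, b)) =
        c • (Matrix.of fun a b => M (p.1, a) (q.1, b)) := rfl
    rw [h, map_smul]
    rfl

/-- `Φ ⊗ id_k` as a linear map. -/
def blockApplyRightL (k : Type) (Φ : Matrix n n ℂ →ₗ[ℂ] Matrix m m ℂ) :
    Matrix (n × k) (n × k) ℂ →ₗ[ℂ] Matrix (m × k) (m × k) ℂ where
  toFun := blockApplyRight Φ
  map_add' M N := by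
    ext p q
    show Φ (Matrix.of fun a b => (M + N) (a, p.2) (b, q.2)) p.1 q.1 = _
    have h : (Matrix.of fun a b => (M + N) (a, p.2) (b, q.2)) =
        (Matrix.of fun a b => M (a, p.2) (b, q.2)) +
          (Matrix.of fun a b => N (a, p.2) (b, q.2)) := rfl
    rw [h, map_add]
    rfl
  map_smul' c M := by
    ext p q
    show Φ (Matrix.of fun a b => (c • M) (a, p.2) (b, q.2)) p.1 q.1 = _
    have h : (Matrix.of fun a b => (c • M) (a, p.2) (b, q.2)) =
        c • (Matrix.of fun a b => M (a, p.2) (b, q.2)) := rfl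
    rw [h, map_smul]
    rfl

/-- Tensor product of two channels (Kronecker product action). -/
def tensorChannel {n₁ m₁ n₂ m₂ : Type}
    (E₁ : Matrix n₁ n₁ ℂ →ₗ[ℂ] Matrix m₁ m₁ ℂ) (E₂ : Matrix n₂ n₂ ℂ →ₗ[ℂ] Matrix m₂ m₂ ℂ) :
    Matrix (n₁ × n₂) (n₁ × n₂) ℂ →ₗ[ℂ] Matrix (m₁ × m₂) (m₁ × m₂) ℂ :=
  (blockApplyRightL m₂ E₁).comp (blockApplyL n₁ E₂)

/-- Index type for `k`-fold tensor powers. -/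
def tpow (ι : Type) : ℕ → Type
  | 0 => PUnit
  | (k+1) => tpow ι k × ι

def tpowFintype (ι : Type) [Fintype ι] : ∀ k : ℕ, Fintype (tpow ι k)
  | 0 => inferInstanceAs (Fintype PUnit)
  | (k+1) => letI := tpowFintype ι k; inferInstanceAs (Fintype (tpow ι k × ι))

instance (ι : Type) [Fintype ι] (k : ℕ) : Fintype (tpow ι k) := tpowFintype ι k

def tpowDecEq (ι : Type) [DecidableEq ι] : ∀ k : ℕ, DecidableEq (tpow ι k)
  | 0 => inferInstanceAs (DecidableEq PUnit)
  | (k+1) => letI := tpowDecEq ι k; inferInstanceAs (DecidableEq (tpow ι k × ι))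

instance (ι : Type) [DecidableEq ι] (k : ℕ) : DecidableEq (tpow ι k) := tpowDecEq ι k

/-- `k`-fold Kronecker tensor power of a matrix. -/
def tpowMat (ρ : Matrix n n ℂ) : ∀ k : ℕ, Matrix (tpow n k) (tpow n k) ℂ
  | 0 => 1
  | (k+1) => (tpowMat ρ k) ⊗ₖ ρ

/-- `k`-fold tensor power of a channel. -/
def tpowChannel (Φ : Matrix n n ℂ →ₗ[ℂ] Matrix m m ℂ) :
    ∀ k : ℕ, Matrix (tpow n k) (tpow n k) ℂ →ₗ[ℂ] Matrix (tpow m k) (tpow m k) ℂ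
  | 0 => LinearMap.id
  | (k+1) => tensorChannel (tpowChannel Φ k) Φ

/-- Channel divergence induced by a divergence `𝔇` on states:
sup over `k ≥ 1` and input states `ν` on `ℂ^k ⊗ ℂ^d`. -/
def chDiv (𝔇 : ∀ (p : Type) [Fintype p] [DecidableEq p], Matrix p p ℂ → Matrix p p ℂ → EReal)
    (E F : Matrix n n ℂ →ₗ[ℂ] Matrix m m ℂ) : EReal :=
  ⨆ (k : ℕ) (_ : 1 ≤ k) (ν : Matrix (Fin k × n) (Fin k × n) ℂ) (_ : IsState ν),
    𝔇 (Fin k × m) (blockApply E ν) (blockApply F ν)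

/-- The geometric Rényi divergence as a divergence family. -/
def geomD (α : ℝ) : ∀ (p : Type) [Fintype p] [DecidableEq p],
    Matrix p p ℂ → Matrix p p ℂ → EReal :=
  fun _ _ _ => geomRenyi α

/-- The Umegaki relative entropy as a divergence family. -/
def relD : ∀ (p : Type) [Fintype p] [DecidableEq p],
    Matrix p p ℂ → Matrix p p ℂ → EReal :=
  fun _ _ _ => relEntropy

/-- The hypothesis testing divergence as a divergence family. -/
def dHD (ε : ℝ) : ∀ (p : Type) [Fintype p] [DecidableEq p],
    Matrix p p ℂ → Matrix p p ℂ → EReal :=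
  fun _ _ _ => dH ε

/-- Regularized channel relative entropy. -/
def regRelEntropy (E F : Matrix n n ℂ →ₗ[ℂ] Matrix m m ℂ) : EReal :=
  ⨆ (k : ℕ) (_ : 1 ≤ k),
    (((k : ℝ)⁻¹ : ℝ) : EReal) * chDiv relD (tpowChannel E k) (tpowChannel F k)

end QCD

namespace QCD


section helpers

open Matrix

set_option linter.unusedSectionVars false

variable {n : Type} [Fintype n] [DecidableEq n]

/-- Complex-valued functional calculus. -/
def cfun {A : Matrix n n ℂ} (hA : A.IsHermitian) (f : ℝ → ℂ) : Matrix n n ℂ :=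
  (hA.eigenvectorUnitary : Matrix n n ℂ) *
      Matrix.diagonal (fun i => f (hA.eigenvalues i)) *
      (star (hA.eigenvectorUnitary : Matrix n n ℂ))

lemma matFun_eq_cfun {A : Matrix n n ℂ} (hA : A.IsHermitian) (f : ℝ → ℝ) :
    matFun f A = cfun hA (fun x => (f x : ℂ)) := by
  simp [matFun, cfun, hA]

lemma eU_star_mul {A : Matrix n n ℂ} (hA : A.IsHermitian) :
    star (hA.eigenvectorUnitary : Matrix n n ℂ) * (hA.eigenvectorUnitary : Matrix n n ℂ) = 1 :=
  Unitary.coe_star_mul_self _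

lemma eU_mul_star {A : Matrix n n ℂ} (hA : A.IsHermitian) :
    (hA.eigenvectorUnitary : Matrix n n ℂ) * star (hA.eigenvectorUnitary : Matrix n n ℂ) = 1 :=
  Unitary.coe_mul_star_self _

lemma cfun_mul {A : Matrix n n ℂ} (hA : A.IsHermitian) (f g : ℝ → ℂ) :
    cfun hA f * cfun hA g = cfun hA (fun x => f x * g x) := by
  unfold cfun
  rw [← Matrix.diagonal_mul_diagonal]
  calc _ = (hA.eigenvectorUnitary : Matrix n n ℂ) *
      Matrix.diagonal (fun i => f (hA.eigenvalues i)) *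
      (star (hA.eigenvectorUnitary : Matrix n n ℂ) * (hA.eigenvectorUnitary : Matrix n n ℂ)) *
      Matrix.diagonal (fun i => g (hA.eigenvalues i)) *
      star (hA.eigenvectorUnitary : Matrix n n ℂ) := by simp only [Matrix.mul_assoc]
    _ = _ := by rw [eU_star_mul]; simp only [Matrix.mul_assoc, Matrix.one_mul]

lemma cfun_add {A : Matrix n n ℂ} (hA : A.IsHermitian) (f g : ℝ → ℂ) :
    cfun hA f + cfun hA g = cfun hA (fun x => f x + g x) := by
  unfold cfun
  rw [← Matrix.diagonal_add, Matrix.mul_add, Matrix.add_mul]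

lemma cfun_congr {A : Matrix n n ℂ} (hA : A.IsHermitian) {f g : ℝ → ℂ}
    (h : ∀ i, f (hA.eigenvalues i) = g (hA.eigenvalues i)) : cfun hA f = cfun hA g := by
  unfold cfun
  simp only [h]

lemma cfun_star {A : Matrix n n ℂ} (hA : A.IsHermitian) (f : ℝ → ℂ) :
    (cfun hA f)ᴴ = cfun hA (fun x => star (f x)) := by
  unfold cfun
  simp only [Matrix.conjTranspose_mul, Matrix.diagonal_conjTranspose, Matrix.star_eq_conjTranspose,
    Matrix.conjTranspose_conjTranspose, Matrix.mul_assoc]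
  rfl

lemma cfun_one {A : Matrix n n ℂ} (hA : A.IsHermitian) : cfun hA (fun _ => 1) = 1 := by
  unfold cfun
  simp [eU_mul_star]

lemma cfun_id {A : Matrix n n ℂ} (hA : A.IsHermitian) : cfun hA (fun x => (x : ℂ)) = A := by
  conv_rhs => rw [hA.spectral_theorem]
  rfl

lemma cfun_smul {A : Matrix n n ℂ} (hA : A.IsHermitian) (c : ℂ) (f : ℝ → ℂ) :
    c • cfun hA f = cfun hA (fun x => c * f x) := by
  have : cfun hA (fun _ => c) = c • 1 := by
    have h : Matrix.diagonal (fun _ : n => c) = c • (1 : Matrix n n ℂ) := by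
      ext i j; simp [Matrix.diagonal, Matrix.one_apply]
    unfold cfun
    rw [h]; simp [eU_mul_star]
  rw [← cfun_mul, this]; simp

lemma trace_cfun_mul {A : Matrix n n ℂ} (hA : A.IsHermitian) (f : ℝ → ℂ) (B : Matrix n n ℂ) :
    (cfun hA f * B).trace = ∑ i, f (hA.eigenvalues i) *
      (star (hA.eigenvectorUnitary : Matrix n n ℂ) * B * (hA.eigenvectorUnitary : Matrix n n ℂ)) i i := by
  unfold cfun
  rw [Matrix.mul_assoc, Matrix.mul_assoc, Matrix.trace_mul_comm, Matrix.mul_assoc,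
    Matrix.trace]
  simp only [Matrix.diag_apply, Matrix.diagonal_mul, Matrix.mul_assoc]

lemma cfun_posSemidef {A : Matrix n n ℂ} (hA : A.IsHermitian) (f : ℝ → ℂ)
    (hf : ∀ i, 0 ≤ f (hA.eigenvalues i)) : (cfun hA f).PosSemidef := by
  unfold cfun
  rw [Matrix.star_eq_conjTranspose]
  exact (Matrix.PosSemidef.diagonal (fun i => hf i)).mul_mul_conjTranspose_same _

lemma rtr_nonneg {A : Matrix n n ℂ} (hA : A.PosSemidef) : 0 ≤ rtr A :=
  (Complex.le_def.1 hA.trace_nonneg).1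

lemma rtr_add (A B : Matrix n n ℂ) : rtr (A + B) = rtr A + rtr B := by simp [rtr]

lemma rtr_sub (A B : Matrix n n ℂ) : rtr (A - B) = rtr A - rtr B := by simp [rtr]

lemma rtr_mul_comm (A B : Matrix n n ℂ) : rtr (A * B) = rtr (B * A) := by
  rw [rtr, Matrix.trace_mul_comm]; rfl

/-- `Tr B K Bᴴ ≤ Tr B Bᴴ` for `K ≤ 1`. -/
lemma rtr_contr {K : Matrix n n ℂ} (hK : (1 - K).PosSemidef) (B : Matrix n n ℂ) :
    rtr (B * K * Bᴴ) ≤ rtr (B * Bᴴ) := by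
  have := rtr_nonneg (hK.mul_mul_conjTranspose_same B)
  rw [Matrix.mul_sub, Matrix.sub_mul, Matrix.mul_one, rtr_sub] at this
  linarith

lemma rtr_mul_self (A : Matrix n n ℂ) : rtr (A * Aᴴ) = ∑ i, ∑ j, ‖A i j‖ ^ 2 := by
  simp only [rtr, Matrix.trace, Matrix.diag_apply, Matrix.mul_apply, Matrix.conjTranspose_apply,
    Complex.re_sum]
  refine Finset.sum_congr rfl fun i _ => Finset.sum_congr rfl fun j _ => ?_
  rw [Complex.star_def, Complex.mul_conj, Complex.ofReal_re, Complex.normSq_eq_norm_sq]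

lemma norm_trace_mul_le (A B : Matrix n n ℂ) :
    2 * ‖(A * B).trace‖ ≤ rtr (A * Aᴴ) + rtr (Bᴴ * B) := by
  have hB : rtr (Bᴴ * B) = ∑ i, ∑ j, ‖B j i‖ ^ 2 := by
    have := rtr_mul_self (Bᴴ)
    simpa using this
  rw [rtr_mul_self, hB, ← Finset.sum_add_distrib]
  have h1 : ‖(A * B).trace‖ ≤ ∑ i, ∑ j, ‖A i j‖ * ‖B j i‖ := by
    simp only [Matrix.trace, Matrix.diag_apply, Matrix.mul_apply]
    refine (norm_sum_le _ _).trans (Finset.sum_le_sum fun i _ => (norm_sum_le _ _).trans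
      (Finset.sum_le_sum fun j _ => (norm_mul _ _).le))
  refine (mul_le_mul_of_nonneg_left h1 zero_le_two).trans ?_
  rw [Finset.mul_sum]
  refine Finset.sum_le_sum fun i _ => ?_
  rw [Finset.mul_sum, ← Finset.sum_add_distrib]
  refine Finset.sum_le_sum fun j _ => ?_
  nlinarith [sq_nonneg (‖A i j‖ - ‖B j i‖)]

/-- Complex powers on the support. -/
def cp (z : ℂ) (x : ℝ) : ℂ := if x = 0 then 0 else Complex.exp (z * Real.log x)

lemma cp_mul (z w : ℂ) (x : ℝ) : cp z x * cp w x = cp (z + w) x := by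
  unfold cp; split_ifs <;> simp [← Complex.exp_add, add_mul]

lemma cp_star (z : ℂ) (x : ℝ) : star (cp z x) = cp (star z) x := by
  unfold cp; split_ifs
  · simp
  · rw [Complex.star_def, ← Complex.exp_conj, map_mul, Complex.conj_ofReal]

lemma cp_one {x : ℝ} (hx : 0 ≤ x) : cp 1 x = x := by
  unfold cp; split_ifs with h
  · simp [h]
  · rw [one_mul, ← Complex.ofReal_exp, Real.exp_log (lt_of_le_of_ne hx (Ne.symm h))]

lemma mpow_eq {A : Matrix n n ℂ} (hA : A.PosSemidef) (t : ℝ) :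
    mpow A t = cfun hA.1 (cp t) := by
  rw [mpow, matFun_eq_cfun hA.1]
  refine cfun_congr _ fun i => ?_
  have h0 := hA.eigenvalues_nonneg i
  unfold cp; split_ifs with h
  · simp
  · rw [Real.rpow_def_of_pos (lt_of_le_of_ne h0 (Ne.symm h)), mul_comm]; push_cast; rfl

lemma cfun_cp_one {A : Matrix n n ℂ} (hA : A.PosSemidef) : cfun hA.1 (cp 1) = A := by
  conv_rhs => rw [← cfun_id hA.1]
  exact cfun_congr _ fun i => cp_one (hA.eigenvalues_nonneg i)

lemma cfun_cp_mul {A : Matrix n n ℂ} (hA : A.IsHermitian) (z w : ℂ) :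
    cfun hA (cp z) * cfun hA (cp w) = cfun hA (cp (z + w)) := by
  rw [cfun_mul]; simp only [cp_mul]

lemma cfun_cp_star {A : Matrix n n ℂ} (hA : A.IsHermitian) (z : ℂ) :
    (cfun hA (cp z))ᴴ = cfun hA (cp (star z)) := by
  rw [cfun_star]; simp only [cp_star]

lemma cfun_cp_zero_le {A : Matrix n n ℂ} (hA : A.IsHermitian) :
    (1 - cfun hA (cp 0)).PosSemidef := by
  have : 1 - cfun hA (cp 0) = cfun hA (fun x => if x = 0 then 1 else 0) := by
    rw [sub_eq_iff_eq_add, cfun_add, ← cfun_one hA]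
    refine cfun_congr _ fun i => ?_
    simp only [cp]; split_ifs <;> simp
  rw [this]
  refine cfun_posSemidef _ _ fun i => ?_
  split_ifs <;> simp

/-- `ρ` absorbs the support projection of `σ`. -/
lemma mul_supp {ρ σ : Matrix n n ℂ} (hσ : σ.PosSemidef) (h : SuppLE ρ σ) :
    ρ * cfun hσ.1 (cp 0) = ρ := by
  have h1 : σ * (1 - cfun hσ.1 (cp 0)) = 0 := by
    rw [Matrix.mul_sub, Matrix.mul_one]
    nth_rw 2 [← cfun_cp_one hσ]
    rw [cfun_cp_mul, add_zero, cfun_cp_one hσ, sub_self]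
  have h2 : ρ * (1 - cfun hσ.1 (cp 0)) = 0 := by
    ext i j
    have := h (fun k => (1 - cfun hσ.1 (cp 0)) k j) (by
      ext i
      exact congrFun (congrFun h1 i) j)
    exact congrFun this i
  rw [Matrix.mul_sub, Matrix.mul_one, sub_eq_zero] at h2
  exact h2.symm

lemma supp_mul {ρ σ : Matrix n n ℂ} (hρ : ρ.PosSemidef) (hσ : σ.PosSemidef) (h : SuppLE ρ σ) :
    cfun hσ.1 (cp 0) * ρ = ρ := by
  have := congrArg Matrix.conjTranspose (mul_supp hσ h)
  rwa [Matrix.conjTranspose_mul, cfun_cp_star, star_zero, hρ.1.eq] at this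


/-- Entrywise entire and bounded on the strip `0 ≤ Re z ≤ 1`. -/
def Good (A : ℂ → Matrix n n ℂ) : Prop :=
  ∀ i j, Differentiable ℂ (fun z => A z i j) ∧
    ∃ C : ℝ, ∀ z : ℂ, 0 ≤ z.re → z.re ≤ 1 → ‖A z i j‖ ≤ C

lemma Good.const (A : Matrix n n ℂ) : Good (fun _ => A) :=
  fun i j => ⟨differentiable_const _, ‖A i j‖, fun _ _ _ => le_rfl⟩

lemma Good.mul {A B : ℂ → Matrix n n ℂ} (hA : Good A) (hB : Good B) :
    Good (fun z => A z * B z) := by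
  intro i j
  choose dA CA hCA using hA
  choose dB CB hCB using hB
  constructor
  · simp only [Matrix.mul_apply]
    exact Differentiable.fun_sum fun k _ => (dA i k).mul (dB k j)
  · refine ⟨∑ k, CA i k * CB k j, fun z h0 h1 => ?_⟩
    show ‖(A z * B z) i j‖ ≤ _
    rw [Matrix.mul_apply]
    refine (norm_sum_le _ _).trans (Finset.sum_le_sum fun k _ => ?_)
    rw [norm_mul]
    exact mul_le_mul (hCA _ _ z h0 h1) (hCB _ _ z h0 h1) (norm_nonneg _)
      ((norm_nonneg _).trans (hCA _ _ z h0 h1))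

lemma Good.cfun {A : Matrix n n ℂ} (hA : A.IsHermitian) (a b : ℝ) :
    Good (fun z => cfun hA (cp (a * z + b))) := by
  have hD : Good (fun z : ℂ =>
      Matrix.diagonal (fun i => cp (a * z + b) (hA.eigenvalues i))) := by
    intro i j
    by_cases hij : i = j
    · subst hij
      simp only [Matrix.diagonal_apply_eq]
      unfold cp
      split_ifs with h
      · exact ⟨differentiable_const _, 0, by simp⟩
      · constructor
        · fun_prop
        · refine ⟨Real.exp (|a * Real.log (hA.eigenvalues i)| + |b * Real.log (hA.eigenvalues i)|),
            fun z h0 h1 => ?_⟩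
          rw [Complex.norm_exp]
          apply Real.exp_le_exp.2
          have : ((a * z + b) * (Real.log (hA.eigenvalues i)) : ℂ).re
            = (a * Real.log (hA.eigenvalues i)) * z.re + b * Real.log (hA.eigenvalues i) := by
            simp; ring
          rw [this]
          refine add_le_add ((le_abs_self _).trans ?_) (le_abs_self _)
          rw [abs_mul, abs_of_nonneg h0]
          exact mul_le_of_le_one_right (abs_nonneg _) h1
    · simp only [Matrix.diagonal_apply_ne _ hij]
      exact ⟨differentiable_const _, 0, by simp⟩
  exact ((Good.const _).mul hD).mul (Good.const _)

lemma proj_one_sub {P : Matrix n n ℂ} (h1 : Pᴴ = P) (h2 : P * P = P) : (1 - P).PosSemidef := by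
  have : 1 - P = (1 - P) * (1 - P)ᴴ := by
    rw [Matrix.conjTranspose_sub, h1, Matrix.conjTranspose_one]
    simp [Matrix.mul_sub, Matrix.sub_mul, h2]
  rw [this]
  exact Matrix.posSemidef_self_mul_conjTranspose _

lemma cfun_cp_eq {A : Matrix n n ℂ} (hA : A.IsHermitian) {z w : ℂ} (h : z = w) :
    cfun hA (cp z) = cfun hA (cp w) := by rw [h]

/-- Interpolation inequality. -/
lemma interp {ρ σ P : Matrix n n ℂ} (hρ : ρ.PosSemidef) (hσ : σ.PosSemidef)
    (hs : SuppLE ρ σ) (h1 : Pᴴ = P) (h2 : P * P = P) {α : ℝ} (hα : 1 < α) :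
    rtr (P * ρ) ≤ rtr (mpow ρ α * mpow σ (1 - α)) ^ (1 / α) * rtr (P * σ) ^ ((α - 1) / α) := by
  have hα0 : (α : ℂ) ≠ 0 := by exact_mod_cast (by linarith : α ≠ 0)
  have hα0' : α ≠ 0 := by linarith
  have hP := proj_one_sub h1 h2
  obtain ⟨X, hX⟩ : ∃ X : ℂ → Matrix n n ℂ, ∀ z, X z = cfun hσ.1 (cp ((α / 2 : ℝ) * z + ((1 - α) / 2 : ℝ))) :=
    ⟨_, fun _ => rfl⟩
  obtain ⟨Y, hY⟩ : ∃ Y : ℂ → Matrix n n ℂ, ∀ z, Y z = cfun hρ.1 (cp ((-α : ℝ) * z + (α : ℝ))) :=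
    ⟨_, fun _ => rfl⟩
  have gX : Good X := by
    have := Good.cfun hσ.1 (α / 2) ((1 - α) / 2)
    simpa only [← hX] using this
  have gY : Good Y := by
    have := Good.cfun hρ.1 (-α) α
    simpa only [← hY] using this
  obtain ⟨F, hF⟩ : ∃ F : ℂ → ℂ, ∀ z, F z = (P * X z * Y z * X z).trace := ⟨_, fun _ => rfl⟩
  have hG : Good (fun z => P * X z * Y z * X z) :=
    (((Good.const P).mul gX).mul gY).mul gX
  choose dG CG hCG using hG
  have hd : Differentiable ℂ F := by
    have : F = fun z => ∑ k, (P * X z * Y z * X z) k k := funext hF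
    rw [this]
    exact Differentiable.fun_sum fun k _ => dG k k
  have hB : BddAbove ((norm ∘ F) '' Complex.HadamardThreeLines.verticalClosedStrip 0 1) := by
    refine ⟨∑ k, CG k k, ?_⟩
    rintro _ ⟨z, hz, rfl⟩
    show ‖F z‖ ≤ _
    rw [hF]
    exact (norm_sum_le _ _).trans (Finset.sum_le_sum fun k _ => hCG k k z hz.1 hz.2)
  have hleft : ∀ z ∈ Complex.re ⁻¹' {(0:ℝ)}, ‖F z‖ ≤ rtr (mpow ρ α * mpow σ (1 - α)) := by
    intro z hz
    have hz0 : z.re = 0 := hz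
    obtain ⟨Z, hZ⟩ : ∃ Z : Matrix n n ℂ, Z = cfun hρ.1 (cp ((-(α/2) : ℝ) * z + (α/2 : ℝ))) := ⟨_, rfl⟩
    have hYZ : Y z = Z * Z := by
      rw [hZ, cfun_cp_mul, hY]; apply cfun_cp_eq; push_cast; ring
    have hFz : F z = ((Z * X z * P) * (P * X z * Z)).trace := by
      have : (Z * X z * P) * (P * X z * Z) = (Z * X z) * ((P * P) * (X z * Z)) := by
        simp only [Matrix.mul_assoc]
      rw [this, h2, hF]
      rw [hYZ, Matrix.trace_mul_comm (Z * X z)]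
      simp only [Matrix.mul_assoc]
    have e1 : (Z * X z * P) * (Z * X z * P)ᴴ = (Z * X z) * P * (Z * X z)ᴴ := by
      rw [Matrix.conjTranspose_mul (Z * X z), h1]
      calc _ = Z * X z * (P * P) * (Z * X z)ᴴ := by simp only [Matrix.mul_assoc]
        _ = _ := by rw [h2]
    have e2 : (P * X z * Z)ᴴ * (P * X z * Z) = (X z * Z)ᴴ * P * ((X z * Z)ᴴ)ᴴ := by
      rw [Matrix.mul_assoc P, Matrix.conjTranspose_mul P, h1, Matrix.conjTranspose_conjTranspose]
      calc _ = (X z * Z)ᴴ * (P * P) * (X z * Z) := by simp only [Matrix.mul_assoc]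
        _ = _ := by rw [h2]
    have zs : z + star z = 0 := by
      rw [Complex.star_def, Complex.add_conj, hz0]; simp
    have zs' : star z = -z := by linear_combination zs
    have sX : (X z)ᴴ = cfun hσ.1 (cp (-(α / 2 : ℝ) * z + ((1 - α) / 2 : ℝ))) := by
      rw [hX]; rw [cfun_cp_star]; apply cfun_cp_eq
      simp only [star_add, star_mul', zs', Complex.star_def, Complex.conj_ofReal]; ring
    have sZ : Zᴴ = cfun hρ.1 (cp ((α / 2 : ℝ) * z + (α / 2 : ℝ))) := by
      rw [hZ, cfun_cp_star]; apply cfun_cp_eq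
      simp only [star_add, star_mul', zs', Complex.star_def, Complex.conj_ofReal]; push_cast; ring
    have q1 : X z * (X z)ᴴ = mpow σ (1 - α) := by
      rw [sX, mpow_eq hσ, hX]; rw [cfun_cp_mul]; apply cfun_cp_eq; push_cast; ring
    have q2 : (X z)ᴴ * X z = mpow σ (1 - α) := by
      rw [sX, mpow_eq hσ, hX]; rw [cfun_cp_mul]; apply cfun_cp_eq; push_cast; ring
    have q3 : Zᴴ * Z = mpow ρ α := by
      rw [sZ, mpow_eq hρ, hZ]; rw [cfun_cp_mul]; apply cfun_cp_eq; push_cast; ring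
    have q4 : Z * Zᴴ = mpow ρ α := by
      rw [sZ, mpow_eq hρ, hZ]; rw [cfun_cp_mul]; apply cfun_cp_eq; push_cast; ring
    have b1 : rtr ((Z * X z) * (Z * X z)ᴴ) = rtr (mpow ρ α * mpow σ (1 - α)) := by
      rw [Matrix.conjTranspose_mul, ← Matrix.mul_assoc, rtr_mul_comm, ← q3, ← q1]
      simp only [Matrix.mul_assoc]
    have b2 : rtr ((X z * Z)ᴴ * ((X z * Z)ᴴ)ᴴ) = rtr (mpow ρ α * mpow σ (1 - α)) := by
      rw [Matrix.conjTranspose_conjTranspose, Matrix.conjTranspose_mul, ← Matrix.mul_assoc,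
        rtr_mul_comm, ← q4, ← q2]
      simp only [Matrix.mul_assoc]
    have := norm_trace_mul_le (Z * X z * P) (P * X z * Z)
    rw [← hFz, e1, e2] at this
    have c1 := rtr_contr hP (Z * X z)
    have c2 := rtr_contr hP ((X z * Z)ᴴ)
    rw [b1] at c1
    rw [b2] at c2
    linarith
  have hright : ∀ z ∈ Complex.re ⁻¹' {(1:ℝ)}, ‖F z‖ ≤ rtr (P * σ) := by
    intro z hz
    have hz1 : z.re = 1 := hz
    have hFz : F z = ((P * X z * Y z) * (X z * P)).trace := by
      rw [← Matrix.mul_assoc, Matrix.trace_mul_comm _ P]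
      simp only [← Matrix.mul_assoc, h2, hF]
    have zs : z + star z = 2 := by
      rw [Complex.star_def, Complex.add_conj, hz1]; simp
    have zs' : star z = 2 - z := by linear_combination zs
    have sX : (X z)ᴴ = cfun hσ.1 (cp (-(α / 2 : ℝ) * z + ((1 + α) / 2 : ℝ))) := by
      rw [hX]; rw [cfun_cp_star]; apply cfun_cp_eq
      simp only [star_add, star_mul', zs', Complex.star_def, Complex.conj_ofReal]; push_cast; ring
    have sY : (Y z)ᴴ = cfun hρ.1 (cp ((α : ℝ) * z - (α : ℝ))) := by
      rw [hY]; rw [cfun_cp_star]; apply cfun_cp_eq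
      simp only [star_add, star_mul', zs', Complex.star_def, Complex.conj_ofReal]; push_cast; ring
    have q1 : X z * (X z)ᴴ = σ := by
      conv_rhs => rw [← cfun_cp_one hσ]
      rw [sX, hX]; rw [cfun_cp_mul]; apply cfun_cp_eq; push_cast; ring
    have q2 : (X z)ᴴ * X z = σ := by
      conv_rhs => rw [← cfun_cp_one hσ]
      rw [sX, hX]; rw [cfun_cp_mul]; apply cfun_cp_eq; push_cast; ring
    have q3 : Y z * (Y z)ᴴ = cfun hρ.1 (cp 0) := by
      rw [sY, hY]; rw [cfun_cp_mul]; apply cfun_cp_eq; push_cast; ring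
    have hPσ : rtr (P * σ * P) = rtr (P * σ) := by
      rw [rtr_mul_comm, ← Matrix.mul_assoc, h2]
    have e1 : (P * X z * Y z) * (P * X z * Y z)ᴴ = (P * X z) * (cfun hρ.1 (cp 0)) * (P * X z)ᴴ := by
      rw [Matrix.conjTranspose_mul (P * X z), ← q3]
      simp only [Matrix.mul_assoc]
    have e2 : (X z * P)ᴴ * (X z * P) = P * σ * P := by
      rw [Matrix.conjTranspose_mul, h1, ← q2]
      simp only [Matrix.mul_assoc]
    have e3 : (P * X z) * (P * X z)ᴴ = P * σ * P := by
      rw [Matrix.conjTranspose_mul, h1, ← q1]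
      simp only [Matrix.mul_assoc]
    have := norm_trace_mul_le (P * X z * Y z) (X z * P)
    rw [← hFz, e1, e2, hPσ] at this
    have c1 := rtr_contr (cfun_cp_zero_le hρ.1) (P * X z)
    rw [e3, hPσ] at c1
    linarith
  set θ : ℝ := (α - 1) / α with hθ
  have hθ0 : 0 ≤ θ := div_nonneg (by linarith) (by linarith)
  have hθ1 : θ ≤ 1 := by rw [hθ, div_le_one (by linarith)]; linarith
  have key := Complex.HadamardThreeLines.norm_le_interp_of_mem_verticalClosedStrip' (f := F)
    (z := (θ : ℂ)) zero_lt_one (by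
      show (θ : ℂ).re ∈ Set.Icc 0 1
      simp [hθ0, hθ1]) hd.diffContOnCl hB hleft hright
  have hFθ : F θ = (P * ρ).trace := by
    have x0 : X θ = cfun hσ.1 (cp 0) := by
      rw [hX]; apply cfun_cp_eq; rw [hθ]; push_cast; field_simp; ring
    have y0 : Y θ = ρ := by
      conv_rhs => rw [← cfun_cp_one hρ]
      rw [hY]; apply cfun_cp_eq; rw [hθ]; push_cast; field_simp; ring
    rw [hF]
    rw [x0, y0, Matrix.mul_assoc, mul_supp hσ hs, Matrix.mul_assoc, supp_mul hρ hσ hs]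
  rw [hFθ] at key
  have e4 : 1 - ((θ : ℂ).re - 0) / (1 - 0) = 1 / α := by
    simp [hθ]; field_simp; ring
  have e5 : ((θ : ℂ).re - 0) / (1 - 0) = θ := by simp
  rw [e4, e5] at key
  exact (Complex.re_le_norm _).trans key


lemma trace_cfun {A : Matrix n n ℂ} (hA : A.IsHermitian) (f : ℝ → ℂ) :
    (cfun hA f).trace = ∑ i, f (hA.eigenvalues i) := by
  have := trace_cfun_mul hA f 1
  rw [Matrix.mul_one, Matrix.mul_one, eU_star_mul] at this
  simpa using this

lemma cfun_real_star {A : Matrix n n ℂ} (hA : A.IsHermitian) (f : ℝ → ℝ) :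
    (cfun hA (fun x => (f x : ℂ)))ᴴ = cfun hA (fun x => (f x : ℂ)) := by
  rw [cfun_star]; simp

lemma rtr_cfun_mul_le {A : Matrix n n ℂ} (hA : A.IsHermitian) (R : Matrix n n ℂ) :
    ∃ K : ℝ, 0 ≤ K ∧ ∀ (g : ℝ → ℝ) (B : ℝ), (∀ i, |g (hA.eigenvalues i)| ≤ B) →
      rtr (cfun hA (fun x => (g x : ℂ)) * R) ≤ B * K := by
  refine ⟨∑ i, ‖(star (hA.eigenvectorUnitary : Matrix n n ℂ) * R *
    (hA.eigenvectorUnitary : Matrix n n ℂ)) i i‖, Finset.sum_nonneg fun _ _ => norm_nonneg _, ?_⟩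
  intro g B hg
  rw [rtr, trace_cfun_mul]
  refine (Complex.re_le_norm _).trans ((norm_sum_le _ _).trans ?_)
  rw [Finset.mul_sum]
  refine Finset.sum_le_sum fun i _ => ?_
  rw [norm_mul, Complex.norm_real, Real.norm_eq_abs]
  exact mul_le_mul_of_nonneg_right (hg i) (norm_nonneg _)

lemma msqrt_eq {A : Matrix n n ℂ} (hA : A.IsHermitian) :
    msqrt A = cfun hA (fun x => ((Real.sqrt x : ℝ) : ℂ)) := matFun_eq_cfun hA _

lemma msqrt_star {A : Matrix n n ℂ} (hA : A.PosSemidef) : (msqrt A)ᴴ = msqrt A := by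
  rw [msqrt_eq hA.1, cfun_real_star]

lemma msqrt_mul_self {A : Matrix n n ℂ} (hA : A.PosSemidef) : msqrt A * msqrt A = A := by
  rw [msqrt_eq hA.1, cfun_mul]
  conv_rhs => rw [← cfun_id hA.1]
  refine cfun_congr _ fun i => ?_
  rw [← Complex.ofReal_mul, Real.mul_self_sqrt (hA.eigenvalues_nonneg i)]

/-- Lower bound on the root fidelity by its dual program. -/
lemma fid_lower {ρ τ : Matrix n n ℂ} (hρ : ρ.PosSemidef) (hτ : τ.PosSemidef) (c : ℝ)
    (h : ∀ V W : Matrix n n ℂ, V * W = 1 → 2 * c ≤ rtr (V * ρ * Vᴴ) + rtr (Wᴴ * τ * W)) :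
    c ≤ rtr (msqrt (msqrt τ * ρ * msqrt τ)) := by
  obtain ⟨s, hs⟩ : ∃ s, s = msqrt τ := ⟨_, rfl⟩
  have hss : sᴴ = s := by rw [hs, msqrt_star hτ]
  obtain ⟨T, hT⟩ : ∃ T, T = s * ρ * s := ⟨_, rfl⟩
  have hTp : T.PosSemidef := by
    have := hρ.mul_mul_conjTranspose_same s
    rwa [hss, ← hT] at this
  rw [← hs, ← hT]
  have ht : rtr (msqrt T) = ∑ i, Real.sqrt (hTp.1.eigenvalues i) := by
    rw [rtr, msqrt_eq hTp.1, trace_cfun, Complex.re_sum]; simp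
  obtain ⟨K1, hK1, hR1⟩ := rtr_cfun_mul_le hTp.1 (s * ρ + ρ * s)
  obtain ⟨K2, hK2, hR2⟩ := rtr_cfun_mul_le hTp.1 ρ
  have main : ∀ δ : ℝ, 0 < δ → δ ≤ 1 →
      2 * c ≤ 2 * rtr (msqrt T) + δ * (K1 + K2 + Fintype.card n) := by
    intro δ hδ hδ1
    have hpos : ∀ x : ℝ, 0 < Real.sqrt x + δ := fun x => by positivity
    have hpos2 : ∀ x : ℝ, 0 < Real.sqrt x + δ ^ 2 := fun x => by positivity
    obtain ⟨S, hS⟩ : ∃ S, S = cfun hτ.1 (fun x => ((Real.sqrt x + δ ^ 2 : ℝ) : ℂ)) := ⟨_, rfl⟩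
    obtain ⟨Si, hSi⟩ : ∃ S, S = cfun hτ.1 (fun x => (((Real.sqrt x + δ ^ 2)⁻¹ : ℝ) : ℂ)) :=
      ⟨_, rfl⟩
    obtain ⟨D, hD⟩ : ∃ S, S = cfun hTp.1 (fun x => ((Real.sqrt (Real.sqrt x + δ) : ℝ) : ℂ)) :=
      ⟨_, rfl⟩
    obtain ⟨Di, hDi⟩ : ∃ S, S = cfun hTp.1 (fun x => (((Real.sqrt (Real.sqrt x + δ))⁻¹ : ℝ) : ℂ)) :=
      ⟨_, rfl⟩
    have hSs : Sᴴ = S := by rw [hS, cfun_real_star]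
    have hSis : Siᴴ = Si := by rw [hSi, cfun_real_star]
    have hDs : Dᴴ = D := by rw [hD, cfun_real_star]
    have hDis : Diᴴ = Di := by rw [hDi, cfun_real_star]
    have hSSi : S * Si = 1 := by
      rw [hS, hSi, cfun_mul, ← cfun_one hτ.1]
      refine cfun_congr _ fun i => ?_
      rw [← Complex.ofReal_mul, mul_inv_cancel₀ (hpos2 _).ne', Complex.ofReal_one]
    have hDiD : Di * D = 1 := by
      rw [hDi, hD, cfun_mul, ← cfun_one hTp.1]
      refine cfun_congr _ fun i => ?_
      rw [← Complex.ofReal_mul, inv_mul_cancel₀ (Real.sqrt_pos.2 (hpos _)).ne', Complex.ofReal_one]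
    have hSeq : S = s + ((δ ^ 2 : ℝ) : ℂ) • 1 := by
      rw [hS, hs, msqrt_eq hτ.1, ← cfun_one hτ.1, cfun_smul, cfun_add]
      refine cfun_congr _ fun i => ?_
      push_cast; ring
    have hDD : Di * Di = cfun hTp.1 (fun x => (((Real.sqrt x + δ)⁻¹ : ℝ) : ℂ)) := by
      rw [hDi, cfun_mul]
      refine cfun_congr _ fun i => ?_
      rw [← Complex.ofReal_mul, ← mul_inv, Real.mul_self_sqrt (hpos _).le]
    have hDD' : D * D = cfun hTp.1 (fun x => ((Real.sqrt x + δ : ℝ) : ℂ)) := by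
      rw [hD, cfun_mul]
      refine cfun_congr _ fun i => ?_
      rw [← Complex.ofReal_mul, Real.mul_self_sqrt (hpos _).le]
    have key := h (Di * S) (Si * D) (by
      calc Di * S * (Si * D) = Di * (S * Si) * D := by simp only [Matrix.mul_assoc]
        _ = 1 := by rw [hSSi, Matrix.mul_one, hDiD])
    -- second term
    have t2 : rtr ((Si * D)ᴴ * τ * (Si * D)) ≤ rtr (msqrt T) + δ * Fintype.card n := by
      have e1 : (Si * D)ᴴ * τ * (Si * D) = D * (Si * τ * Si) * Dᴴ := by
        rw [Matrix.conjTranspose_mul, hSis, hDs]; simp only [Matrix.mul_assoc]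
      have e2 : (1 - Si * τ * Si).PosSemidef := by
        have : Si * τ * Si = cfun hτ.1 (fun x => ((x * ((Real.sqrt x + δ ^ 2)⁻¹) ^ 2 : ℝ) : ℂ)) := by
          nth_rw 1 [← cfun_id hτ.1]
          rw [hSi, cfun_mul, cfun_mul]
          refine cfun_congr _ fun i => ?_
          push_cast; ring
        have h3 : 1 - Si * τ * Si =
            cfun hτ.1 (fun x => ((1 - x * ((Real.sqrt x + δ ^ 2)⁻¹) ^ 2 : ℝ) : ℂ)) := by
          rw [sub_eq_iff_eq_add, this, cfun_add, ← cfun_one hτ.1]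
          refine cfun_congr _ fun i => ?_
          push_cast; ring
        rw [h3]
        refine cfun_posSemidef _ _ fun i => ?_
        rw [Complex.zero_le_real, inv_pow, ← div_eq_mul_inv, sub_nonneg, div_le_one (by
          have := hpos2 (hτ.1.eigenvalues i); positivity)]
        have h4 := Real.sq_sqrt (hτ.eigenvalues_nonneg i)
        have h5 := Real.sqrt_nonneg (hτ.1.eigenvalues i)
        nlinarith [sq_nonneg δ]
      rw [e1]
      refine (rtr_contr e2 D).trans ?_
      rw [hDs, hDD', rtr, trace_cfun, ht, Complex.re_sum]
      simp [Finset.sum_add_distrib, mul_comm]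
    have t1 : rtr (Di * S * ρ * (Di * S)ᴴ) ≤ rtr (msqrt T) + δ * (K1 + K2) := by
      have e1 : rtr (Di * S * ρ * (Di * S)ᴴ) = rtr (Di * Di * (S * ρ * S)) := by
        rw [Matrix.conjTranspose_mul, hSs, hDis, ← Matrix.mul_assoc, rtr_mul_comm]
        simp only [Matrix.mul_assoc]
      have e2 : S * ρ * S = T + ((δ ^ 2 : ℝ) : ℂ) • (s * ρ + ρ * s) + ((δ ^ 4 : ℝ) : ℂ) • ρ := by
        rw [hSeq, hT]
        simp only [Matrix.add_mul, Matrix.mul_add, Matrix.smul_mul, Matrix.mul_smul,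
          Matrix.one_mul, Matrix.mul_one, smul_add, smul_smul]
        have : ((δ ^ 4 : ℝ) : ℂ) = ((δ ^ 2 : ℝ) : ℂ) * ((δ ^ 2 : ℝ) : ℂ) := by push_cast; ring
        rw [this]
        abel
      have e3 : ∀ (a : ℝ) (B : Matrix n n ℂ), Di * Di * ((a : ℂ) • B) =
          cfun hTp.1 (fun x => ((a * (Real.sqrt x + δ)⁻¹ : ℝ) : ℂ)) * B := by
        intro a B
        rw [Matrix.mul_smul, ← Matrix.smul_mul, hDD, cfun_smul]
        simp only [Complex.ofReal_mul]
      have hb : ∀ (a : ℝ), 0 ≤ a → ∀ i, |a * (Real.sqrt (hTp.1.eigenvalues i) + δ)⁻¹| ≤ a / δ := by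
        intro a ha i
        rw [abs_of_nonneg (mul_nonneg ha (inv_nonneg.2 (hpos _).le)), ← div_eq_mul_inv]
        exact div_le_div_of_nonneg_left ha hδ (by linarith [Real.sqrt_nonneg (hTp.1.eigenvalues i)])
      have f1 := hR1 (fun x => δ ^ 2 * (Real.sqrt x + δ)⁻¹) _ (hb (δ ^ 2) (by positivity))
      have f2 := hR2 (fun x => δ ^ 4 * (Real.sqrt x + δ)⁻¹) _ (hb (δ ^ 4) (by positivity))
      have f0 : rtr (Di * Di * T) ≤ rtr (msqrt T) := by
        nth_rw 1 [← cfun_id hTp.1]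
        rw [hDD, cfun_mul, rtr, trace_cfun, ht, Complex.re_sum]
        refine Finset.sum_le_sum fun i _ => ?_
        rw [← Complex.ofReal_mul, Complex.ofReal_re, inv_mul_le_iff₀ (hpos _)]
        have h4 := Real.sq_sqrt (hTp.eigenvalues_nonneg i)
        have h5 := Real.sqrt_nonneg (hTp.1.eigenvalues i)
        nlinarith
      rw [e1, e2, Matrix.mul_add, Matrix.mul_add, rtr_add, rtr_add, e3, e3]
      have g1 : δ ^ 2 / δ = δ := by field_simp
      have g2 : δ ^ 4 / δ = δ ^ 3 := by field_simp
      rw [g1] at f1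
      rw [g2] at f2
      have g3 : δ ^ 3 * K2 ≤ δ * K2 := by
        apply mul_le_mul_of_nonneg_right _ hK2
        calc δ ^ 3 ≤ δ ^ 1 := pow_le_pow_of_le_one hδ.le hδ1 (by norm_num)
          _ = δ := pow_one δ
      linarith
    linarith
  by_contra hcon
  push Not at hcon
  set K := K1 + K2 + (Fintype.card n : ℝ) with hK
  have hK0 : 0 ≤ K := by positivity
  have hgap : 0 < c - rtr (msqrt T) := by linarith
  have hδ : 0 < min 1 ((c - rtr (msqrt T)) / (K + 1)) := lt_min one_pos (by positivity)
  have := main _ hδ (min_le_left _ _)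
  have h2 : min 1 ((c - rtr (msqrt T)) / (K + 1)) * K ≤ c - rtr (msqrt T) := by
    calc _ ≤ (c - rtr (msqrt T)) / (K + 1) * K := mul_le_mul_of_nonneg_right (min_le_right _ _) hK0
      _ ≤ (c - rtr (msqrt T)) / (K + 1) * (K + 1) :=
        mul_le_mul_of_nonneg_left (by linarith) (by positivity)
      _ = _ := by field_simp
  linarith


/-- Matrices diagonal in the eigenbasis of `A`. -/
def udiag {A : Matrix n n ℂ} (hA : A.IsHermitian) (f : n → ℂ) : Matrix n n ℂ :=
  (hA.eigenvectorUnitary : Matrix n n ℂ) * Matrix.diagonal f *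
      (star (hA.eigenvectorUnitary : Matrix n n ℂ))

lemma udiag_mul {A : Matrix n n ℂ} (hA : A.IsHermitian) (f g : n → ℂ) :
    udiag hA f * udiag hA g = udiag hA (fun x => f x * g x) := by
  unfold udiag
  rw [← Matrix.diagonal_mul_diagonal]
  calc _ = (hA.eigenvectorUnitary : Matrix n n ℂ) *
      Matrix.diagonal f *
      (star (hA.eigenvectorUnitary : Matrix n n ℂ) * (hA.eigenvectorUnitary : Matrix n n ℂ)) *
      Matrix.diagonal g *
      star (hA.eigenvectorUnitary : Matrix n n ℂ) := by simp only [Matrix.mul_assoc]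
    _ = _ := by rw [eU_star_mul]; simp only [Matrix.mul_assoc, Matrix.one_mul]

lemma udiag_star {A : Matrix n n ℂ} (hA : A.IsHermitian) (f : n → ℂ) :
    (udiag hA f)ᴴ = udiag hA (fun x => star (f x)) := by
  unfold udiag
  simp only [Matrix.conjTranspose_mul, Matrix.diagonal_conjTranspose, Matrix.star_eq_conjTranspose,
    Matrix.conjTranspose_conjTranspose, Matrix.mul_assoc]
  rfl

lemma rtr_udiag_mul {A : Matrix n n ℂ} (hA : A.IsHermitian) (f : n → ℝ) (B : Matrix n n ℂ) :
    rtr (udiag hA (fun i => (f i : ℂ)) * B) = ∑ i, f i *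
      ((star (hA.eigenvectorUnitary : Matrix n n ℂ) * B *
        (hA.eigenvectorUnitary : Matrix n n ℂ)) i i).re := by
  unfold udiag rtr
  rw [Matrix.mul_assoc, Matrix.mul_assoc, Matrix.trace_mul_comm, Matrix.mul_assoc,
    Matrix.trace]
  simp only [Matrix.diag_apply, Matrix.diagonal_mul, Matrix.mul_assoc, Complex.re_sum,
    Complex.re_ofReal_mul]

lemma udiag_id {A : Matrix n n ℂ} (hA : A.IsHermitian) :
    udiag hA (fun i => (hA.eigenvalues i : ℂ)) = A := cfun_id hA

lemma scalar_step {Q x y r e α : ℝ} (hα : 1 < α) (hQ : 0 < Q) (hr : 0 < r) (he : 0 < e)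
    (hrQ : r ^ (α - 1) = Q / e) (hy : 0 ≤ y) (hxy : r * y ≤ x)
    (h : x ≤ Q ^ (1 / α) * y ^ ((α - 1) / α)) : x ≤ e := by
  rcases le_or_gt x 0 with hx | hx
  · linarith
  have hα0 : α ≠ 0 := by linarith
  have h1 : x ^ α ≤ Q * y ^ (α - 1) := by
    have := Real.rpow_le_rpow hx.le h (by linarith : (0:ℝ) ≤ α)
    rwa [Real.mul_rpow (by positivity) (by positivity), ← Real.rpow_mul hQ.le,
      ← Real.rpow_mul hy, one_div_mul_cancel hα0, Real.rpow_one, div_mul_cancel₀ _ hα0] at this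
  have h2 : (r * y) ^ (α - 1) ≤ x ^ (α - 1) :=
    Real.rpow_le_rpow (by positivity) hxy (by linarith)
  rw [Real.mul_rpow hr.le hy, hrQ] at h2
  have h3 : x ^ α = x * x ^ (α - 1) := by
    rw [← Real.rpow_one_add' hx.le (by linarith)]; congr 1; ring
  have h4 : 0 < x ^ (α - 1) := by positivity
  have h5 : Q * y ^ (α - 1) ≤ e * x ^ (α - 1) := by
    have := mul_le_mul_of_nonneg_left h2 he.le
    calc _ = e * (Q / e * y ^ (α - 1)) := by field_simp
      _ ≤ _ := this
  rw [h3] at h1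
  exact le_of_mul_le_mul_right (h1.trans h5) h4

lemma rtr_smul (c : ℝ) (A : Matrix n n ℂ) : rtr ((c : ℂ) • A) = c * rtr A := by
  simp [rtr]

lemma trace_eq_rtr {A : Matrix n n ℂ} (hA : A.PosSemidef) : A.trace = (rtr A : ℂ) := by
  have := (Complex.le_def.1 hA.trace_nonneg).2
  apply Complex.ext
  · simp [rtr]
  · simpa using this.symm

lemma per_M {ρ σ M : Matrix n n ℂ} (hρ : IsState ρ) (hσ : IsState σ) (hs : SuppLE ρ σ)
    (hM : M.PosSemidef) {α ε r : ℝ} (hα : 1 < α) (hε : 0 < ε) (hε1 : ε < 1) (hr : 0 < r)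
    (hQ : 0 < rtr (mpow ρ α * mpow σ (1 - α)))
    (hrQ : r ^ (α - 1) = rtr (mpow ρ α * mpow σ (1 - α)) / ε ^ 2) :
    ∃ ρ' : Matrix n n ℂ, ρ'.PosSemidef ∧ ρ'.trace = 1 ∧
      (∀ V W : Matrix n n ℂ, V * W = 1 →
        2 * Real.sqrt (1 - ε ^ 2) ≤ rtr (V * ρ * Vᴴ) + rtr (Wᴴ * ρ' * W)) ∧
      rtr (M * ρ') ≤ r / (1 - ε ^ 2) * rtr (M * σ) := by
  obtain ⟨U, hU⟩ : ∃ U, U = (hM.1.eigenvectorUnitary : Matrix n n ℂ) := ⟨_, rfl⟩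
  obtain ⟨p, hp⟩ : ∃ p : n → ℝ, p = fun i => ((star U * ρ * U) i i).re := ⟨_, rfl⟩
  obtain ⟨q, hq⟩ : ∃ q : n → ℝ, q = fun i => ((star U * σ * U) i i).re := ⟨_, rfl⟩
  have hp0 : ∀ i, 0 ≤ p i := fun i => by
    rw [hp]
    exact (Complex.le_def.1 ((hρ.1.conjTranspose_mul_mul_same U).diag_nonneg (i := i))).1
  have hq0 : ∀ i, 0 ≤ q i := fun i => by
    rw [hq]
    exact (Complex.le_def.1 ((hσ.1.conjTranspose_mul_mul_same U).diag_nonneg (i := i))).1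
  obtain ⟨a, ha⟩ : ∃ a : n → ℝ, a = fun i => if r * q i < p i then 0 else 1 := ⟨_, rfl⟩
  have haa : ∀ i, a i * a i = a i := fun i => by rw [ha]; simp
  have ha0 : ∀ i, 0 ≤ a i := fun i => by rw [ha]; dsimp only; split_ifs <;> norm_num
  have hap : ∀ i, a i * p i ≤ r * q i := fun i => by
    rw [ha]; dsimp only; split_ifs with h
    · simpa using mul_nonneg hr.le (hq0 i)
    · linarith
  have hap' : ∀ i, r * ((1 - a i) * q i) ≤ (1 - a i) * p i := fun i => by
    rw [ha]; dsimp only; split_ifs with h <;> simp; linarith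
  have ha1 : ∀ i, 0 ≤ 1 - a i := fun i => by rw [ha]; dsimp only; split_ifs <;> norm_num
  obtain ⟨A, hA⟩ : ∃ A, A = udiag hM.1 (fun i => (a i : ℂ)) := ⟨_, rfl⟩
  obtain ⟨P, hP⟩ : ∃ P, P = udiag hM.1 (fun i => ((1 - a i : ℝ) : ℂ)) := ⟨_, rfl⟩
  have hAs : Aᴴ = A := by rw [hA, udiag_star]; simp
  have hPs : Pᴴ = P := by
    rw [hP, udiag_star]; congr 1; ext i; rw [Complex.star_def, Complex.conj_ofReal]
  have hAA : A * A = A := by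
    rw [hA, udiag_mul]; congr 1; ext i; rw [← Complex.ofReal_mul, haa]
  have hPP : P * P = P := by
    rw [hP, udiag_mul]; congr 1; ext i; rw [← Complex.ofReal_mul]; congr 1
    linear_combination haa i
  have hρtr : rtr ρ = ∑ i, p i := by
    have := rtr_udiag_mul hM.1 (fun _ => 1) ρ
    have h1 : udiag hM.1 (fun i => ((1 : ℝ) : ℂ)) = 1 := by
      have := cfun_one hM.1
      simpa [udiag, cfun] using this
    rw [h1, Matrix.one_mul, ← hU] at this
    rw [this, hp]; simp
  have hPρ : rtr (P * ρ) = ∑ i, (1 - a i) * p i := by rw [hP, rtr_udiag_mul, hp, ← hU]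
  have hPσ : rtr (P * σ) = ∑ i, (1 - a i) * q i := by rw [hP, rtr_udiag_mul, hq, ← hU]
  have hAρ : rtr (A * ρ) = ∑ i, a i * p i := by rw [hA, rtr_udiag_mul, hp, ← hU]
  have hMσ : rtr (M * σ) = ∑ i, hM.1.eigenvalues i * q i := by
    have := rtr_udiag_mul hM.1 hM.1.eigenvalues σ
    rw [udiag_id, ← hU] at this
    rw [this, hq]
  have hx : rtr (P * ρ) ≤ ε ^ 2 := by
    refine scalar_step hα hQ hr (by positivity) hrQ ?_ ?_ (interp hρ.1 hσ.1 hs hPs hPP hα)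
    · rw [hPσ]; exact Finset.sum_nonneg fun i _ => mul_nonneg (ha1 i) (hq0 i)
    · rw [hPσ, hPρ, Finset.mul_sum]; exact Finset.sum_le_sum fun i _ => hap' i
  have hρ1 : rtr ρ = 1 := by rw [rtr, hρ.2]; simp
  obtain ⟨t, ht⟩ : ∃ t, t = rtr (A * ρ) := ⟨_, rfl⟩
  have htx : 1 - ε ^ 2 ≤ t := by
    have : rtr (P * ρ) + rtr (A * ρ) = 1 := by
      rw [← hρ1, hρtr, hPρ, hAρ, ← Finset.sum_add_distrib]
      exact Finset.sum_congr rfl fun i _ => by ring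
    linarith
  have he : 0 < 1 - ε ^ 2 := by nlinarith
  have ht0 : 0 < t := he.trans_le htx
  have hps : (A * ρ * A).PosSemidef := by
    have := hρ.1.mul_mul_conjTranspose_same A
    rwa [hAs] at this
  have htr : rtr (A * ρ * A) = t := by
    rw [rtr_mul_comm, ← Matrix.mul_assoc, hAA, ht]
  refine ⟨((t⁻¹ : ℝ) : ℂ) • (A * ρ * A), hps.smul ?_, ?_, ?_, ?_⟩
  · exact_mod_cast (inv_pos.2 ht0).le
  · rw [Matrix.trace_smul, trace_eq_rtr hps, htr, smul_eq_mul, ← Complex.ofReal_mul,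
      inv_mul_cancel₀ ht0.ne', Complex.ofReal_one]
  · intro V W hVW
    have hWV : W * V = 1 := mul_eq_one_comm.1 hVW
    obtain ⟨N, hN⟩ : ∃ N, N = msqrt ρ := ⟨_, rfl⟩
    have hNs : Nᴴ = N := by rw [hN, msqrt_star hρ.1]
    have hNN : N * N = ρ := by rw [hN, msqrt_mul_self hρ.1]
    have key := norm_trace_mul_le (V * N) ((((Real.sqrt t)⁻¹ : ℝ) : ℂ) • (N * A * W))
    have e1 : V * N * (V * N)ᴴ = V * ρ * Vᴴ := by
      rw [Matrix.conjTranspose_mul, hNs, ← hNN]; simp only [Matrix.mul_assoc]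
    have e2 : ((((Real.sqrt t)⁻¹ : ℝ) : ℂ) • (N * A * W))ᴴ *
        ((((Real.sqrt t)⁻¹ : ℝ) : ℂ) • (N * A * W)) =
        Wᴴ * (((t⁻¹ : ℝ) : ℂ) • (A * ρ * A)) * W := by
      rw [Matrix.conjTranspose_smul, Complex.star_def, Complex.conj_ofReal, Matrix.smul_mul,
        Matrix.mul_smul, smul_smul, ← Complex.ofReal_mul, ← mul_inv, Real.mul_self_sqrt ht0.le,
        Matrix.conjTranspose_mul, Matrix.conjTranspose_mul, hNs, hAs, ← hNN, Matrix.mul_smul,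
        Matrix.smul_mul]
      simp only [Matrix.mul_assoc]
    have e3 : ((V * N) * ((((Real.sqrt t)⁻¹ : ℝ) : ℂ) • (N * A * W))).trace =
        (((Real.sqrt t)⁻¹ : ℝ) : ℂ) * (A * ρ).trace := by
      rw [Matrix.mul_smul, Matrix.trace_smul, smul_eq_mul]
      congr 1
      have : V * N * (N * A * W) = V * (ρ * A * W) := by
        rw [← hNN]; simp only [Matrix.mul_assoc]
      rw [this, Matrix.trace_mul_comm, Matrix.mul_assoc, hWV, Matrix.mul_one, Matrix.trace_mul_comm]
    have e4 : Real.sqrt t ≤ ‖((V * N) * ((((Real.sqrt t)⁻¹ : ℝ) : ℂ) • (N * A * W))).trace‖ := by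
      refine le_trans ?_ (Complex.re_le_norm _)
      rw [e3, Complex.re_ofReal_mul]
      change _ ≤ (Real.sqrt t)⁻¹ * rtr (A * ρ)
      rw [← ht, inv_mul_eq_div, Real.div_sqrt]
    rw [e1, e2] at key
    have := Real.sqrt_le_sqrt htx
    linarith
  · rw [Matrix.mul_smul, rtr_smul]
    have h1 : rtr (M * (A * ρ * A)) = ∑ i, hM.1.eigenvalues i * (a i * p i) := by
      have h2 : A * M * A = udiag hM.1 (fun i => ((hM.1.eigenvalues i * a i : ℝ) : ℂ)) := by
        conv_lhs => rw [hA]; enter [1, 2]; rw [← udiag_id hM.1]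
        rw [udiag_mul, udiag_mul]; congr 1; ext i
        rw [← Complex.ofReal_mul, ← Complex.ofReal_mul]; congr 1
        linear_combination hM.1.eigenvalues i * haa i
      have h3 : rtr (M * (A * ρ * A)) = rtr (A * M * A * ρ) := by
        rw [← Matrix.mul_assoc, rtr_mul_comm]; simp only [Matrix.mul_assoc]
      rw [h3, h2, rtr_udiag_mul, hp, ← hU]
      exact Finset.sum_congr rfl fun i _ => by ring
    have h2 : rtr (M * (A * ρ * A)) ≤ r * rtr (M * σ) := by
      rw [h1, hMσ, Finset.mul_sum]
      refine Finset.sum_le_sum fun i _ => ?_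
      have := mul_le_mul_of_nonneg_left (hap i) (hM.eigenvalues_nonneg i)
      linarith
    have h3 : 0 ≤ r * rtr (M * σ) := by
      rw [hMσ]
      exact mul_nonneg hr.le (Finset.sum_nonneg fun i _ =>
        mul_nonneg (hM.eigenvalues_nonneg i) (hq0 i))
    calc t⁻¹ * rtr (M * (A * ρ * A)) ≤ t⁻¹ * (r * rtr (M * σ)) :=
          mul_le_mul_of_nonneg_left h2 (inv_pos.2 ht0).le
      _ ≤ (1 - ε ^ 2)⁻¹ * (r * rtr (M * σ)) :=
          mul_le_mul_of_nonneg_right (inv_anti₀ he htx) h3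
      _ = _ := by ring

lemma psd_iff (A : Matrix n n ℂ) :
    A.PosSemidef ↔ A.IsHermitian ∧ ∀ v : n → ℂ, 0 ≤ (star v ⬝ᵥ (A *ᵥ v)).re := by
  constructor
  · intro h
    exact ⟨h.1, fun v => (Complex.le_def.1 (h.dotProduct_mulVec_nonneg v)).1⟩
  · rintro ⟨h1, h2⟩
    refine Matrix.PosSemidef.of_dotProduct_mulVec_nonneg h1 fun v => ?_
    refine Complex.le_def.2 ⟨h2 v, ?_⟩
    have := h1.im_star_dotProduct_mulVec_self v
    simpa using this.symm

lemma isClosed_psd : IsClosed {A : Matrix n n ℂ | A.PosSemidef} := by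
  have : {A : Matrix n n ℂ | A.PosSemidef} = {A | Aᴴ = A} ∩
      ⋂ v : n → ℂ, {A | 0 ≤ (star v ⬝ᵥ (A *ᵥ v)).re} := by
    ext A
    simp only [Set.mem_setOf_eq, Set.mem_inter_iff, Set.mem_iInter, psd_iff]
    rfl
  rw [this]
  refine IsClosed.inter (isClosed_eq (by fun_prop) (by fun_prop)) (isClosed_iInter fun v => ?_)
  refine isClosed_le continuous_const (Complex.continuous_re.comp ?_)
  fun_prop

lemma continuous_rtr : Continuous (rtr : Matrix n n ℂ → ℝ) := by
  unfold rtr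
  exact Complex.continuous_re.comp (by fun_prop)

lemma state_entry_le {X : Matrix n n ℂ} (hX : X.PosSemidef) (h1 : X.trace = 1) (i j : n) :
    ‖X i j‖ ≤ Fintype.card n := by
  obtain ⟨N, hN⟩ : ∃ N, N = msqrt X := ⟨_, rfl⟩
  have hNs : Nᴴ = N := by rw [hN, msqrt_star hX]
  have hNN : N * N = X := by rw [hN, msqrt_mul_self hX]
  have h2 : ∑ i, ∑ j, ‖N i j‖ ^ 2 = 1 := by
    rw [← rtr_mul_self, hNs, hNN, rtr, h1]; simp
  have h3 : ∀ a b, ‖N a b‖ ≤ 1 := by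
    intro a b
    have : ‖N a b‖ ^ 2 ≤ 1 := by
      rw [← h2]
      refine le_trans ?_ (Finset.single_le_sum (f := fun i => ∑ j, ‖N i j‖ ^ 2)
        (fun i _ => Finset.sum_nonneg fun j _ => by positivity) (Finset.mem_univ a))
      exact Finset.single_le_sum (f := fun j => ‖N a j‖ ^ 2) (fun j _ => by positivity)
        (Finset.mem_univ b)
    nlinarith [norm_nonneg (N a b)]
  rw [← hNN, Matrix.mul_apply]
  refine (norm_sum_le _ _).trans ?_
  calc ∑ k, ‖N i k * N k j‖ ≤ ∑ k : n, (1 : ℝ) := Finset.sum_le_sum fun k _ => by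
        rw [norm_mul]
        exact mul_le_one₀ (h3 _ _) (norm_nonneg _) (h3 _ _)
    _ = _ := by simp

/-- States whose root fidelity with `ρ` is at least `c`, in dual form. -/
def fidSet (ρ : Matrix n n ℂ) (c : ℝ) : Set (Matrix n n ℂ) :=
  {X | X.PosSemidef ∧ X.trace = 1 ∧ ∀ V W : Matrix n n ℂ, V * W = 1 →
        2 * c ≤ rtr (V * ρ * Vᴴ) + rtr (Wᴴ * X * W)}

lemma isClosed_fidSet (ρ : Matrix n n ℂ) (c : ℝ) : IsClosed (fidSet ρ c) := by
  have : fidSet ρ c = {A | A.PosSemidef} ∩ ({A | A.trace = 1} ∩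
      ⋂ V : Matrix n n ℂ, ⋂ W : Matrix n n ℂ, ⋂ _ : V * W = 1,
        {X | 2 * c ≤ rtr (V * ρ * Vᴴ) + rtr (Wᴴ * X * W)}) := by
    ext A
    simp [fidSet]
  rw [this]
  refine isClosed_psd.inter ((isClosed_eq (by fun_prop) (by fun_prop)).inter ?_)
  refine isClosed_iInter fun V => isClosed_iInter fun W => isClosed_iInter fun _ => ?_
  refine isClosed_le continuous_const (continuous_const.add (continuous_rtr.comp ?_))
  fun_prop

lemma isCompact_fidSet (ρ : Matrix n n ℂ) (c : ℝ) : IsCompact (fidSet ρ c) := by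
  have hK : IsCompact (Set.pi Set.univ fun _ : n => Set.pi Set.univ fun _ : n =>
      Metric.closedBall (0 : ℂ) (Fintype.card n)) :=
    isCompact_univ_pi fun _ => isCompact_univ_pi fun _ => isCompact_closedBall _ _
  refine IsCompact.of_isClosed_subset (X := Matrix n n ℂ) hK (isClosed_fidSet ρ c) ?_
  intro X hX i _ j _
  simpa using state_entry_le hX.1 hX.2.1 i j

lemma psd_convex {A B : Matrix n n ℂ} (hA : A.PosSemidef) (hB : B.PosSemidef) {a b : ℝ}
    (ha : 0 ≤ a) (hb : 0 ≤ b) : (a • A + b • B).PosSemidef := by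
  have e : ∀ (c : ℝ) (X : Matrix n n ℂ), c • X = (c : ℂ) • X := fun c X => by
    ext i j; simp
  rw [e, e]
  exact (hA.smul (by exact_mod_cast ha)).add (hB.smul (by exact_mod_cast hb))

lemma rtr_rsmul (c : ℝ) (A : Matrix n n ℂ) : rtr (c • A) = c * rtr A := by
  simp [rtr]

lemma convex_fidSet (ρ : Matrix n n ℂ) (c : ℝ) : Convex ℝ (fidSet ρ c) := by
  rintro X ⟨hX1, hX2, hX3⟩ Y ⟨hY1, hY2, hY3⟩ a b ha hb hab
  refine ⟨psd_convex hX1 hY1 ha hb, ?_, ?_⟩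
  · rw [Matrix.trace_add, Matrix.trace_smul, Matrix.trace_smul, hX2, hY2]
    simp only [Complex.real_smul, mul_one]
    exact_mod_cast hab
  · intro V W h
    have h1 := mul_le_mul_of_nonneg_left (hX3 V W h) ha
    have h2 := mul_le_mul_of_nonneg_left (hY3 V W h) hb
    have h3 : rtr (Wᴴ * (a • X + b • Y) * W) = a * rtr (Wᴴ * X * W) + b * rtr (Wᴴ * Y * W) := by
      rw [Matrix.mul_add, Matrix.add_mul, rtr_add, Matrix.mul_smul, Matrix.mul_smul,
        Matrix.smul_mul, Matrix.smul_mul, rtr_rsmul, rtr_rsmul]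
    rw [h3]
    have hb' : b = 1 - a := by linarith
    subst hb'
    linarith

lemma exists_smooth {ρ σ : Matrix n n ℂ} (hρ : IsState ρ) (hσ : IsState σ) (hs : SuppLE ρ σ)
    {α ε r : ℝ} (hα : 1 < α) (hε : 0 < ε) (hε1 : ε < 1) (hr : 0 < r)
    (hQ : 0 < rtr (mpow ρ α * mpow σ (1 - α)))
    (hrQ : r ^ (α - 1) = rtr (mpow ρ α * mpow σ (1 - α)) / ε ^ 2) :
    ∃ X ∈ fidSet ρ (Real.sqrt (1 - ε ^ 2)),
      (((r / (1 - ε ^ 2) : ℝ) : ℂ) • σ - X).PosSemidef := by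
  obtain ⟨k, hk⟩ : ∃ k, k = r / (1 - ε ^ 2) := ⟨_, rfl⟩
  rw [← hk]
  by_contra hcon
  push Not at hcon
  obtain ⟨D, hD⟩ : ∃ D : Set (Matrix n n ℂ), D = {X | ((k : ℂ) • σ - X).PosSemidef} := ⟨_, rfl⟩
  have hdisj : Disjoint (fidSet ρ (Real.sqrt (1 - ε ^ 2))) D := by
    rw [Set.disjoint_left]
    intro X hX hXD
    rw [hD] at hXD
    exact hcon X hX hXD
  have hDcl : IsClosed D := by
    rw [hD]
    exact isClosed_psd.preimage (f := fun X : Matrix n n ℂ => (k : ℂ) • σ - X) (by fun_prop)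
  have hDcv : Convex ℝ D := by
    rw [hD]
    intro X hX Y hY a b ha hb hab
    have := psd_convex hX hY ha hb
    have e : a • ((k : ℂ) • σ - X) + b • ((k : ℂ) • σ - Y) = (k : ℂ) • σ - (a • X + b • Y) := by
      have hb' : b = 1 - a := by linarith
      subst hb'
      module
    rw [e] at this
    exact this
  haveI : LocallyConvexSpace ℝ (Matrix n n ℂ) :=
    inferInstanceAs (LocallyConvexSpace ℝ (n → n → ℂ))
  obtain ⟨f, u, v, h1, huv, h2⟩ := RCLike.geometric_hahn_banach_compact_closed (𝕜 := ℂ)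
    (convex_fidSet ρ _) (isCompact_fidSet ρ _) hDcv hDcl hdisj
  simp only [RCLike.re_eq_complex_re] at h1 h2
  have hσD : (k : ℂ) • σ ∈ D := by
    rw [hD, Set.mem_setOf_eq, sub_self]; exact Matrix.PosSemidef.zero
  have hneg : ∀ Z : Matrix n n ℂ, Z.PosSemidef → (f Z).re ≤ 0 := by
    intro Z hZ
    by_contra hpos
    push Not at hpos
    obtain ⟨s, hs0, hs1⟩ : ∃ s : ℝ, 0 ≤ s ∧ (f ((k : ℂ) • σ)).re - s * (f Z).re ≤ v := by
      refine ⟨((f ((k : ℂ) • σ)).re - v) / (f Z).re, ?_, ?_⟩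
      · have := h2 _ hσD
        exact div_nonneg (by linarith) hpos.le
      · rw [div_mul_cancel₀ _ hpos.ne']; linarith
    have hm : (k : ℂ) • σ - (s : ℂ) • Z ∈ D := by
      rw [hD, Set.mem_setOf_eq, sub_sub_cancel]
      exact hZ.smul (by exact_mod_cast hs0)
    have := h2 _ hm
    simp only [map_sub, map_smul, Complex.sub_re, smul_eq_mul, Complex.re_ofReal_mul] at this hs1
    linarith
  obtain ⟨M, hM⟩ : ∃ M : Matrix n n ℂ, M = Matrix.of fun j i => f (Matrix.single i j 1) := ⟨_, rfl⟩
  have hfM : ∀ X, f X = (M * X).trace := by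
    intro X
    conv_lhs => rw [Matrix.matrix_eq_sum_single X]
    rw [map_sum, Matrix.trace]
    simp only [map_sum, Matrix.diag_apply, Matrix.mul_apply]
    rw [Finset.sum_comm]
    refine Finset.sum_congr rfl fun j _ => Finset.sum_congr rfl fun i _ => ?_
    have : Matrix.single i j (X i j) = X i j • Matrix.single i j (1 : ℂ) := by
      rw [Matrix.smul_single, smul_eq_mul, mul_one]
    rw [this, map_smul, hM, smul_eq_mul, mul_comm]; rfl
  obtain ⟨G, hG⟩ : ∃ G : Matrix n n ℂ, G = (((-1 / 2 : ℝ)) : ℂ) • (M + Mᴴ) := ⟨_, rfl⟩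
  have hGh : G.IsHermitian := by
    change Gᴴ = G
    rw [hG, Matrix.conjTranspose_smul, Complex.star_def, Complex.conj_ofReal,
      Matrix.conjTranspose_add, Matrix.conjTranspose_conjTranspose, add_comm]
  have hGf : ∀ Z : Matrix n n ℂ, Zᴴ = Z → rtr (G * Z) = - (f Z).re := by
    intro Z hZ
    have e : rtr (Mᴴ * Z) = rtr (M * Z) := by
      have : (Mᴴ * Z) = (Z * M)ᴴ := by rw [Matrix.conjTranspose_mul, hZ]
      rw [this, rtr, Matrix.trace_conjTranspose, rtr_mul_comm M Z]
      simp [rtr]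
    rw [hG, Matrix.smul_mul, rtr_smul, Matrix.add_mul, rtr_add, e, hfM]
    unfold rtr; ring
  have hGp : G.PosSemidef := by
    rw [psd_iff]
    refine ⟨hGh, fun w => ?_⟩
    have hZ := Matrix.posSemidef_vecMulVec_self_star w
    have := hneg _ hZ
    have h3 := hGf _ hZ.1
    have h4 : rtr (G * Matrix.vecMulVec w (star w)) = (star w ⬝ᵥ (G *ᵥ w)).re := by
      rw [rtr, Matrix.mul_vecMulVec, Matrix.trace_vecMulVec, dotProduct_comm]
    rw [← h4, h3]; linarith
  obtain ⟨X, hX1, hX2, hX3, hX4⟩ := per_M hρ hσ hs hGp hα hε hε1 hr hQ hrQ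
  have h5 := h1 X ⟨hX1, hX2, hX3⟩
  have h6 := h2 _ hσD
  rw [hGf _ hX1.1, hGf _ hσ.1.1, ← hk] at hX4
  rw [map_smul, smul_eq_mul, Complex.re_ofReal_mul] at h6
  linarith

lemma Q_pos {ρ σ : Matrix n n ℂ} (hρ : IsState ρ) (hσ : IsState σ) (hs : SuppLE ρ σ)
    {α : ℝ} (hα : 1 < α) : 0 < rtr (mpow ρ α * mpow σ (1 - α)) := by
  have hρ1 : rtr ρ = 1 := by rw [rtr, hρ.2]; simp
  have hσ1 : rtr σ = 1 := by rw [rtr, hσ.2]; simp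
  have h0 : 0 ≤ rtr (mpow ρ α * mpow σ (1 - α)) := by
    have e : mpow ρ α = cfun hρ.1.1 (cp ((α / 2 : ℝ) : ℂ)) * cfun hρ.1.1 (cp ((α / 2 : ℝ) : ℂ)) := by
      rw [cfun_cp_mul, mpow_eq hρ.1]; apply cfun_cp_eq; push_cast; ring
    have e2 : mpow σ (1 - α) = cfun hσ.1.1 (cp (((1 - α) / 2 : ℝ) : ℂ)) *
        cfun hσ.1.1 (cp (((1 - α) / 2 : ℝ) : ℂ)) := by
      rw [cfun_cp_mul, mpow_eq hσ.1]; apply cfun_cp_eq; push_cast; ring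
    have e3 := (cfun_cp_star hρ.1.1 ((α / 2 : ℝ) : ℂ)).trans
      (cfun_cp_eq _ (Complex.conj_ofReal _))
    have e4 := (cfun_cp_star hσ.1.1 (((1 - α) / 2 : ℝ) : ℂ)).trans
      (cfun_cp_eq _ (Complex.conj_ofReal _))
    rw [e, e2]
    generalize cfun hρ.1.1 (cp ((α / 2 : ℝ) : ℂ)) = A at *
    generalize cfun hσ.1.1 (cp (((1 - α) / 2 : ℝ) : ℂ)) = B at *
    have : rtr (A * A * (B * B)) = rtr ((A * B) * (A * B)ᴴ) := by
      rw [Matrix.conjTranspose_mul, e3, e4, Matrix.mul_assoc, rtr_mul_comm]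
      simp only [Matrix.mul_assoc]
    rw [this]
    exact rtr_nonneg (Matrix.posSemidef_self_mul_conjTranspose _)
  refine lt_of_le_of_ne h0 fun h => ?_
  have := interp (P := 1) hρ.1 hσ.1 hs (by simp) (by simp) hα
  rw [← h, Matrix.one_mul, Matrix.one_mul, hρ1, hσ1, Real.zero_rpow (by positivity)] at this
  norm_num at this

lemma main_bound {ρ σ : Matrix n n ℂ} (hρ : IsState ρ) (hσ : IsState σ) {ε α : ℝ}
    (hε : 0 < ε) (hε1 : ε < 1) (hα : 1 < α) :
    dMaxSmooth ε ρ σ ≤ petzRenyi α ρ σ +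
      ((2 / (α - 1) * Real.logb 2 (1 / ε) + Real.logb 2 (1 / (1 - ε ^ 2)) : ℝ) : EReal) := by
  by_cases hs : SuppLE ρ σ
  swap
  · have : petzRenyi α ρ σ = ⊤ := by simp [petzRenyi, hα, hs]
    rw [this, EReal.top_add_coe]; exact le_top
  have hQ := Q_pos hρ hσ hs hα
  have hp : petzRenyi α ρ σ =
      (((α - 1)⁻¹ * Real.logb 2 (rtr (mpow ρ α * mpow σ (1 - α))) : ℝ) : EReal) := by
    rw [petzRenyi, if_neg (by simp [hs]), elog, if_neg (not_le.2 hQ), EReal.coe_mul]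
  obtain ⟨Q, hQd⟩ : ∃ Q, Q = rtr (mpow ρ α * mpow σ (1 - α)) := ⟨_, rfl⟩
  have hα1 : α - 1 ≠ 0 := by linarith
  have he : 0 < 1 - ε ^ 2 := by nlinarith
  have hQ' : 0 < Q / ε ^ 2 := by rw [hQd]; positivity
  obtain ⟨X, ⟨hX1, hX2, hX3⟩, hX4⟩ := exists_smooth (r := (Q / ε ^ 2) ^ ((α - 1)⁻¹)) hρ hσ hs hα hε hε1
    (by positivity) hQ (by rw [← Real.rpow_mul hQ'.le, inv_mul_cancel₀ hα1, Real.rpow_one, hQd])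
  have hf := fid_lower hρ.1 hX1 _ hX3
  have hd : sineDist ρ X ≤ ε := by
    rw [sineDist, Real.sqrt_le_left hε.le, fidelity]
    have h1 := pow_le_pow_left₀ (Real.sqrt_nonneg _) hf 2
    rw [Real.sq_sqrt he.le] at h1
    linarith
  rw [hp, ← EReal.coe_add]
  refine iInf₂_le_of_le X ⟨⟨hX1, hX2⟩, hd⟩ (sInf_le ⟨_, rfl, ?_⟩)
  rw [loewnerLE]
  convert hX4 using 4
  rw [← hQd]
  rw [← hQd] at hQ
  rw [← Real.rpow_logb (b := 2) (by norm_num) (by norm_num)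
    (show 0 < (Q / ε ^ 2) ^ (α - 1)⁻¹ / (1 - ε ^ 2) by positivity)]
  congr 1
  rw [one_div, one_div, Real.logb_inv, Real.logb_inv, Real.logb_div (by positivity) he.ne',
    Real.logb_rpow_eq_mul_logb_of_pos hQ', Real.logb_div hQ.ne' (by positivity),
    Real.logb_pow]
  push_cast
  field_simp
  ring

end helpers

/-- Smoothed max-relative entropy bounded by the Petz–Rényi divergence. -/
theorem dMaxSmooth_le_petzRenyi {d : ℕ} (ρ σ : Matrix (Fin d) (Fin d) ℂ)
    (hρ : IsState ρ) (hσ : IsState σ) (ε : ℝ) (hε : 0 < ε ∧ ε < 1) (α : ℝ) (hα : 1 < α) :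
    dMaxSmooth ε ρ σ ≤ petzRenyi α ρ σ +
      ((2 / (α - 1) * Real.logb 2 (1 / ε) + Real.logb 2 (1 / (1 - ε ^ 2)) : ℝ) : EReal) := by
  exact main_bound hρ hσ hε.1 hε.2 hα

end QCD
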